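/- arXiv:1810.05478 — 2 statements merged into one kernel-verified Lean document; each statement's English description precedes it below -/
import Mathlib

section
/- In the Gaussian sequence model, define the adaptive threshold t*_s := √(2σ² log(p/s − 1) + qσ² log log(p/s − 1)) and the adaptive estimator β̂^s by β̂^s_j(Y) = Y_j·1{|Y_j| ≥ t*_s}. Define a_q(1) := √(2σ² log(p/s − 1) + qσ² log log(p/s − 1)) + √(qσ² log log(p/s − 1)) and Φ_ad(a) := σ_q^q s if a ≥ a_q(1), Φ_ad(a) := s σ^q (2 log(p/s − 1))^{q/2} if a < a_q(1). Then for every q ≥ 1 there exists a constant C_q > 0 depending only on q such that for all σ > 0, a > 0 and integers s, p with 1 ≤ s < p/4: sup_{β ∈ Ω^p_{s,a}} E_β‖β̂^s(Y) − β‖_q^q ≤ C_q Φ_ad(a). -/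
/-!
Writing the observation as `β + σ ε` with `ε` standard Gaussian, the threshold is `σ T` with
`T² = 2 L + q log L` and `L = log (p / s - 1) > 1`, and the risk is a sum of one-dimensional risks.
Translating the Gaussian density by `d` gives
`E[g(|ε|); |ε| ≥ d] ≤ 2 exp (-d² / 2) E[g(|ε| + d)]` (`lintegral_tail_le`), from which:

* a null coordinate costs at most a constant times `σ^q T^q exp (-T² / 2)` (`coordRisk_zero`). Since
  `exp (-T² / 2) = (p / s - 1)⁻¹ L^(-q / 2)` and `T^q` is of order `L^(q / 2)`, the `p` coordinates
  together contribute at most a constant times `s σ^q`;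
* a nonnull coordinate always costs at most a constant times `σ^q T^q` (`coordRisk_le`), which is
  the rate for small `a`;
* if `|β_j| ≥ σ (T + d)` with `d² = q log L`, then the coordinate is set to zero only when
  `|ε| ≥ d`, and `T^q P(|ε| ≥ d)` is bounded because `exp (-d² / 2) = L^(-q / 2)`
  (`coordRisk_big`). This is the rate for `a` at least `a_q(1)`.
-/

open MeasureTheory ProbabilityTheory Filter
open scoped ENNReal NNReal BigOperators Classical

noncomputable section

/-- The Gaussian distribution `N(m, σ²)` on `ℝ`. -/
def gauss (m σ : ℝ) : Measure ℝ := gaussianReal m ⟨σ ^ 2, sq_nonneg σ⟩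

/-- The standard Gaussian distribution on `ℝ`. -/
def stdG : Measure ℝ := gaussianReal 0 1

/-- The Gaussian sequence model: `Y` has independent coordinates `Y j ~ N(β j, σ²)`. -/
def seqModel (p : ℕ) (σ : ℝ) (β : Fin p → ℝ) : Measure (Fin p → ℝ) :=
  Measure.pi fun j => gauss (β j) σ

/-- `Ω^p_{s,a}`: `s`-sparse vectors with nonzero coordinates at least `a` in absolute value. -/
def sparseSet (p s : ℕ) (a : ℝ) : Set (Fin p → ℝ) :=
  {β | (Finset.univ.filter fun i => β i ≠ 0).card ≤ s ∧ ∀ i, β i ≠ 0 → a ≤ |β i|}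

/-- The risk `E_β ‖est(Y) − β‖_q^q` in the Gaussian sequence model. -/
def seqRisk (p : ℕ) (σ q : ℝ) (est : (Fin p → ℝ) → Fin p → ℝ) (β : Fin p → ℝ) : ℝ≥0∞ :=
  ∫⁻ y, ENNReal.ofReal (∑ j, |est y j - β j| ^ q) ∂(seqModel p σ β)

/-- The maximal risk over `Ω^p_{s,a}`. -/
def maxRisk (p s : ℕ) (σ q a : ℝ) (est : (Fin p → ℝ) → Fin p → ℝ) : ℝ≥0∞ :=
  ⨆ β ∈ sparseSet p s a, seqRisk p σ q est β

/-- The minimax risk over `Ω^p_{s,a}` in the Gaussian sequence model. -/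
def minimax (p s : ℕ) (σ q a : ℝ) : ℝ≥0∞ :=
  ⨅ (est : (Fin p → ℝ) → Fin p → ℝ) (_ : Measurable est), maxRisk p s σ q a est

/-- `σ_q^q = E|η|^q` where `η ~ N(0, σ²)`. -/
def sigmaqq (σ q : ℝ) : ℝ := ∫ x, |x| ^ q ∂(gauss 0 σ)

/-- `P(σ ε > t)` for a standard Gaussian `ε`. -/
def PgtS (σ t : ℝ) : ℝ := (stdG {x | t < σ * x}).toReal

/-- `P(σ ε ≥ t)` for a standard Gaussian `ε`. -/
def PgeS (σ t : ℝ) : ℝ := (stdG {x | t ≤ σ * x}).toReal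

/-- The threshold `t(a) = a/2 + σ² log(p/s − 1)/a`. -/
def tFun (p s : ℕ) (σ a : ℝ) : ℝ := a / 2 + σ ^ 2 * Real.log ((p : ℝ) / s - 1) / a

/-- `t* = σ √(2 log(p/s − 1))`. -/
def tStar (p s : ℕ) (σ : ℝ) : ℝ := σ * Real.sqrt (2 * Real.log ((p : ℝ) / s - 1))

/-- `ψ(p,s,a,σ) = (p−s) P(σε > t(a)) + s P(σε > a − t(a))`. -/
def psi (p s : ℕ) (σ a : ℝ) : ℝ :=
  ((p : ℝ) - s) * PgtS σ (tFun p s σ a) + s * PgtS σ (a - tFun p s σ a)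

/-- `ψ₊(p,s,a,σ) = (p−s) P(σε > t(a)) + s P(σε > (a − t(a))₊)`. -/
def psiPlus (p s : ℕ) (σ a : ℝ) : ℝ :=
  ((p : ℝ) - s) * PgtS σ (tFun p s σ a) + s * PgtS σ (max (a - tFun p s σ a) 0)

/-- The hard-thresholding estimator at level `τ`. -/
def hardThr (p : ℕ) (τ : ℝ) : (Fin p → ℝ) → Fin p → ℝ :=
  fun y j => if τ ≤ |y j| then y j else 0

/-- The adaptive threshold `t*_s = √(2σ² log(p/s − 1) + qσ² log log(p/s − 1))`. -/
def tStarS (p s : ℕ) (σ q : ℝ) : ℝ :=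
  Real.sqrt (2 * σ ^ 2 * Real.log ((p : ℝ) / s - 1)
    + q * σ ^ 2 * Real.log (Real.log ((p : ℝ) / s - 1)))

/-- `a_q(1)` from the paper. -/
def aOne (p s : ℕ) (σ q : ℝ) : ℝ :=
  Real.sqrt (2 * σ ^ 2 * Real.log ((p : ℝ) / s - 1)
      + q * σ ^ 2 * Real.log (Real.log ((p : ℝ) / s - 1)))
    + Real.sqrt (q * σ ^ 2 * Real.log (Real.log ((p : ℝ) / s - 1)))

/-- The adaptive rate `Φ_ad(a)`. -/
def PhiAd (p s : ℕ) (σ q a : ℝ) : ℝ :=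
  if aOne p s σ q ≤ a then sigmaqq σ q * s
  else s * σ ^ q * (2 * Real.log ((p : ℝ) / s - 1)) ^ (q / 2)

/-! ### Gaussian reduction and tail bound -/

instance gauss_isProbabilityMeasure (m σ : ℝ) : IsProbabilityMeasure (gauss m σ) := by
  exact instIsProbabilityMeasureGaussianReal m _

instance stdG_isProbabilityMeasure : IsProbabilityMeasure stdG := by
  unfold stdG; infer_instance

lemma gauss_eq_map (m σ : ℝ) : gauss m σ = stdG.map (fun x => m + σ * x) := by
  have h1 : (fun x : ℝ => m + σ * x) = (fun x => m + x) ∘ (fun x => σ * x) := rfl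
  rw [h1, ← Measure.map_map (by fun_prop) (by fun_prop), stdG, gaussianReal_map_const_mul,
    gaussianReal_map_const_add, gauss]
  congr 1
  · simp
  · exact (mul_one _).symm

lemma lintegral_gauss (m σ : ℝ) {f : ℝ → ℝ≥0∞} (hf : Measurable f) :
    ∫⁻ y, f y ∂(gauss m σ) = ∫⁻ x, f (m + σ * x) ∂stdG := by
  rw [gauss_eq_map, lintegral_map hf (by fun_prop)]

lemma lintegral_stdG {f : ℝ → ℝ≥0∞} (hf : Measurable f) :
    ∫⁻ x, f x ∂stdG = ∫⁻ x, gaussianPDF 0 1 x * f x := by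
  rw [stdG, gaussianReal_of_var_ne_zero _ one_ne_zero,
    lintegral_withDensity_eq_lintegral_mul _ (measurable_gaussianPDF _ _) hf]
  rfl

lemma gaussianPDF_add_le {u d : ℝ} (hu : 0 ≤ u) (hd : 0 ≤ d) :
    gaussianPDF 0 1 (u + d) ≤ ENNReal.ofReal (Real.exp (-d ^ 2 / 2)) * gaussianPDF 0 1 u := by
  rw [gaussianPDF, gaussianPDF, ← ENNReal.ofReal_mul (Real.exp_nonneg _)]
  apply ENNReal.ofReal_le_ofReal
  simp only [gaussianPDFReal]
  rw [mul_left_comm, ← Real.exp_add]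
  gcongr
  simp only [NNReal.coe_one]
  nlinarith [mul_nonneg hu hd]

/-- The one-sided tail bound: after translating by `d`, the Gaussian density at `u + d` is at most
`exp (-d² / 2)` times the density at `u`, for `u ≥ 0`. -/
lemma lintegral_Ici_le {g : ℝ → ℝ≥0∞} (hg : Measurable g) {d : ℝ} (hd : 0 ≤ d) :
    ∫⁻ x, (Set.Ici d).indicator g x ∂stdG
      ≤ ENNReal.ofReal (Real.exp (-d ^ 2 / 2)) * ∫⁻ u, g (|u| + d) ∂stdG := by
  have hgd : Measurable fun u : ℝ => g (|u| + d) := hg.comp (by fun_prop)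
  rw [lintegral_stdG (hg.indicator measurableSet_Ici), lintegral_stdG hgd,
    ← lintegral_const_mul (f := fun u => gaussianPDF 0 1 u * g (|u| + d)) _
      ((measurable_gaussianPDF _ _).mul hgd),
    ← lintegral_add_right_eq_self (fun x => gaussianPDF 0 1 x * (Set.Ici d).indicator g x) d]
  refine lintegral_mono fun u => ?_
  by_cases hu : 0 ≤ u
  · have : u + d ∈ Set.Ici d := by simpa using hu
    simp only [Set.indicator_of_mem this, abs_of_nonneg hu, ← mul_assoc]
    gcongr
    exact gaussianPDF_add_le hu hd
  · have : u + d ∉ Set.Ici d := by simpa using hu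
    simp [Set.indicator_of_notMem this]

/-- The two-sided tail bound for functions of `|x|`; it carries every use of Gaussian
concentration below. -/
lemma lintegral_tail_le {g : ℝ → ℝ≥0∞} (hg : Measurable g) {d : ℝ} (hd : 0 ≤ d) :
    ∫⁻ x, (Set.Ici d).indicator g |x| ∂stdG
      ≤ ENNReal.ofReal (2 * Real.exp (-d ^ 2 / 2)) * ∫⁻ u, g (|u| + d) ∂stdG := by
  have hF : Measurable ((Set.Ici d).indicator g) := hg.indicator measurableSet_Ici
  have hneg : ∫⁻ x, (Set.Ici d).indicator g (-x) ∂stdG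
      = ∫⁻ x, (Set.Ici d).indicator g x ∂stdG := by
    have h : stdG.map (fun x => -x) = stdG := by
      rw [stdG, gaussianReal_map_neg, neg_zero]
    conv_rhs => rw [← h]
    rw [lintegral_map hF (by fun_prop)]
  calc ∫⁻ x, (Set.Ici d).indicator g |x| ∂stdG
      ≤ ∫⁻ x, ((Set.Ici d).indicator g x + (Set.Ici d).indicator g (-x)) ∂stdG := by
        refine lintegral_mono fun x => ?_
        rcases abs_choice x with h | h <;> rw [h]
        · exact le_self_add
        · exact le_add_self
    _ = 2 * ∫⁻ x, (Set.Ici d).indicator g x ∂stdG := by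
        rw [lintegral_add_left hF, hneg, two_mul]
    _ ≤ 2 * (ENNReal.ofReal (Real.exp (-d ^ 2 / 2)) * ∫⁻ u, g (|u| + d) ∂stdG) := by
        gcongr
        exact lintegral_Ici_le hg hd
    _ = _ := by
        rw [ENNReal.ofReal_mul zero_le_two, ENNReal.ofReal_ofNat, mul_assoc]

/-! ### Gaussian moments -/

/-- The moment `E (1 + |ε|)^q` of a standard Gaussian `ε`. -/
def shiftMoment (q : ℝ) : ℝ := ∫ x, (1 + |x|) ^ q ∂stdG

lemma memLp_id_stdG (q : ℝ) : MemLp (fun x : ℝ => x) (ENNReal.ofReal q) stdG :=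
  memLp_id_gaussianReal' _ ENNReal.ofReal_ne_top

lemma integrable_shift {q : ℝ} (hq : 0 < q) :
    Integrable (fun x : ℝ => (1 + |x|) ^ q) stdG := by
  have h : MemLp (fun x : ℝ => 1 + |x|) (ENNReal.ofReal q) stdG :=
    MemLp.add (f := fun _ => (1 : ℝ)) (g := fun x : ℝ => |x|) (memLp_const (1 : ℝ))
      (memLp_id_stdG q).abs
  have h2 := h.integrable_norm_rpow'
  rw [ENNReal.toReal_ofReal hq.le] at h2
  refine h2.congr (ae_of_all _ fun x => ?_)
  simp only [Real.norm_eq_abs]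
  rw [abs_of_nonneg (by positivity)]

lemma ofReal_shiftMoment {q : ℝ} (hq : 0 < q) :
    ∫⁻ x, ENNReal.ofReal ((1 + |x|) ^ q) ∂stdG = ENNReal.ofReal (shiftMoment q) := by
  rw [shiftMoment, ofReal_integral_eq_lintegral_ofReal (integrable_shift hq)]
  exact ae_of_all _ fun x => by positivity

lemma shiftMoment_nonneg (q : ℝ) : 0 ≤ shiftMoment q :=
  integral_nonneg fun x => by positivity

/-- The moment `E |ε|^q` of a standard Gaussian `ε`. -/
def absMoment (q : ℝ) : ℝ := ∫ x, |x| ^ q ∂stdG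

lemma absMoment_pos {q : ℝ} (hq : 0 < q) : 0 < absMoment q := by
  have hint : Integrable (fun x : ℝ => |x| ^ q) stdG := by
    have h2 := (memLp_id_stdG q).integrable_norm_rpow'
    rw [ENNReal.toReal_ofReal hq.le] at h2
    exact h2
  rw [absMoment, integral_pos_iff_support_of_nonneg (fun x => by positivity) hint]
  have hs : Function.support (fun x : ℝ => |x| ^ q) = {0}ᶜ := by
    ext x
    simp [Real.rpow_eq_zero (abs_nonneg x) hq.ne']
  have : NullSingletonClass stdG := nullSingletonClass_gaussianReal one_ne_zero
  rw [hs, prob_compl_eq_one_sub (measurableSet_singleton 0), measure_singleton]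
  simp

lemma sigmaqq_eq {σ : ℝ} (hσ : 0 < σ) (q : ℝ) : sigmaqq σ q = σ ^ q * absMoment q := by
  rw [sigmaqq, gauss_eq_map, integral_map (by fun_prop)
    (Measurable.aestronglyMeasurable (by fun_prop)), absMoment, ← integral_const_mul]
  refine integral_congr_ae (ae_of_all _ fun x => ?_)
  simp only [zero_add, abs_mul, abs_of_pos hσ]
  rw [Real.mul_rpow hσ.le (abs_nonneg x)]

/-! ### Coordinatewise risk of hard thresholding -/

/-- Scalar hard thresholding at level `τ`. -/
def thr (τ y : ℝ) : ℝ := if τ ≤ |y| then y else 0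

lemma measurable_thr (τ : ℝ) : Measurable (thr τ) :=
  Measurable.ite (measurableSet_le measurable_const (by fun_prop)) measurable_id measurable_const

/-- The risk of scalar hard thresholding at a single mean `b`. -/
def coordRisk (σ q τ b : ℝ) : ℝ≥0∞ := ∫⁻ y, ENNReal.ofReal (|thr τ y - b| ^ q) ∂(gauss b σ)

lemma measurable_coordLoss (q τ b : ℝ) :
    Measurable fun y => ENNReal.ofReal (|thr τ y - b| ^ q) := by
  have := measurable_thr τ
  fun_prop

lemma seqRisk_eq_sum (p : ℕ) (σ q τ : ℝ) (β : Fin p → ℝ) :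
    seqRisk p σ q (hardThr p τ) β = ∑ j, coordRisk σ q τ (β j) := by
  have h0 : ∀ y : Fin p → ℝ, ENNReal.ofReal (∑ j, |hardThr p τ y j - β j| ^ q)
      = ∑ j, ENNReal.ofReal (|thr τ (y j) - β j| ^ q) := fun y =>
    ENNReal.ofReal_sum_of_nonneg fun j _ => by positivity
  rw [seqRisk]
  simp_rw [h0]
  rw [lintegral_finsetSum (f := fun j (y : Fin p → ℝ) => ENNReal.ofReal (|thr τ (y j) - β j| ^ q))
    _ fun j _ => (measurable_coordLoss q τ (β j)).comp (measurable_pi_apply j)]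
  refine Finset.sum_congr rfl fun j _ => ?_
  exact (measurePreserving_eval (fun j => gauss (β j) σ) j).lintegral_comp
    (measurable_coordLoss q τ (β j))

lemma coordRisk_eq (σ q τ b : ℝ) :
    coordRisk σ q τ b = ∫⁻ x, ENNReal.ofReal (|thr τ (b + σ * x) - b| ^ q) ∂stdG := by
  rw [coordRisk, lintegral_gauss _ _ (measurable_coordLoss q τ b)]

/-- At mean zero the loss is `|σ ε|^q` on `{|ε| ≥ T}`, so the tail bound applies. -/
lemma coordRisk_zero {σ q T : ℝ} (hσ : 0 < σ) (hq : 0 < q) (hT : 1 ≤ T) :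
    coordRisk σ q (σ * T) 0
      ≤ ENNReal.ofReal (2 * Real.exp (-T ^ 2 / 2) * (σ ^ q * T ^ q * shiftMoment q)) := by
  have hT0 : 0 ≤ T := by linarith
  set g : ℝ → ℝ≥0∞ := fun x => ENNReal.ofReal (σ ^ q * |x| ^ q)
  have hg : Measurable g := by fun_prop
  have hpt : ∀ x : ℝ, ENNReal.ofReal (|thr (σ * T) (0 + σ * x) - 0| ^ q)
      = (Set.Ici T).indicator g |x| := by
    intro x
    simp only [zero_add, sub_zero, thr, abs_mul, abs_of_pos hσ, mul_le_mul_iff_right₀ hσ]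
    by_cases h : T ≤ |x|
    · rw [Set.indicator_of_mem (by exact h), if_pos h, abs_mul, abs_of_pos hσ,
        Real.mul_rpow hσ.le (abs_nonneg x)]
      simp [g]
    · rw [Set.indicator_of_notMem (by exact h), if_neg h]
      simp [Real.zero_rpow hq.ne']
  rw [coordRisk_eq, lintegral_congr hpt]
  refine (lintegral_tail_le hg hT0).trans ?_
  rw [ENNReal.ofReal_mul (p := 2 * Real.exp (-T ^ 2 / 2)) (by positivity),
    ENNReal.ofReal_mul (p := σ ^ q * T ^ q) (by positivity), ← ofReal_shiftMoment hq,
    ← lintegral_const_mul (f := fun u : ℝ => ENNReal.ofReal ((1 + |u|) ^ q)) _ (by fun_prop)]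
  gcongr with u
  rw [← ENNReal.ofReal_mul (by positivity)]
  apply ENNReal.ofReal_le_ofReal
  rw [mul_assoc, ← Real.mul_rpow hT0 (by positivity), abs_of_nonneg (by positivity)]
  gcongr
  nlinarith [abs_nonneg u]

/-- At any mean, hard thresholding errs by at most the noise plus the threshold. -/
lemma abs_thr_sub_le {σ T b x : ℝ} (hσ : 0 < σ) (hT : 0 ≤ T) :
    |thr (σ * T) (b + σ * x) - b| ≤ σ * (|x| + T) := by
  unfold thr
  split_ifs with h
  · rw [add_sub_cancel_left, abs_mul, abs_of_pos hσ]
    nlinarith [abs_nonneg x]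
  · have h1 : |b| ≤ |b + σ * x| + |σ * x| := by
      have := abs_sub (b + σ * x) (σ * x)
      rwa [add_sub_cancel_right] at this
    rw [abs_mul, abs_of_pos hσ] at h1
    rw [zero_sub, abs_neg]
    push Not at h
    linarith

lemma coordRisk_le {σ q T : ℝ} (b : ℝ) (hσ : 0 < σ) (hq : 0 < q) (hT : 1 ≤ T) :
    coordRisk σ q (σ * T) b ≤ ENNReal.ofReal (σ ^ q * T ^ q * shiftMoment q) := by
  have hT0 : 0 ≤ T := by linarith
  rw [coordRisk_eq, ENNReal.ofReal_mul (p := σ ^ q * T ^ q) (by positivity),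
    ← ofReal_shiftMoment hq, ← lintegral_const_mul _ (by fun_prop)]
  gcongr with x
  rw [← ENNReal.ofReal_mul (by positivity)]
  apply ENNReal.ofReal_le_ofReal
  rw [mul_assoc, ← Real.mul_rpow hT0 (by positivity), ← Real.mul_rpow hσ.le (by positivity)]
  gcongr
  refine (abs_thr_sub_le hσ hT0).trans ?_
  gcongr
  nlinarith [abs_nonneg x]

/-- When the mean exceeds the threshold by `σ d`, a coordinate is set to zero only if `|ε| ≥ d`,
so the term `T ^ q` in the loss is damped by the Gaussian tail at `d`. -/
lemma coordRisk_big {σ q T d b : ℝ} (hσ : 0 < σ) (hq : 0 < q) (hT : 0 ≤ T) (hd : 0 ≤ d)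
    (hb : σ * (T + d) ≤ |b|) :
    coordRisk σ q (σ * T) b
      ≤ ENNReal.ofReal
          (σ ^ q * 2 ^ q * (shiftMoment q + T ^ q * (2 * Real.exp (-d ^ 2 / 2)))) := by
  set A : ℝ := σ ^ q * 2 ^ q
  have hA : 0 ≤ A := by positivity
  set g : ℝ → ℝ≥0∞ := fun _ => ENNReal.ofReal (A * T ^ q)
  have hg : Measurable g := measurable_const
  have hpt : ∀ x : ℝ, ENNReal.ofReal (|thr (σ * T) (b + σ * x) - b| ^ q)
      ≤ ENNReal.ofReal A * ENNReal.ofReal ((1 + |x|) ^ q) + (Set.Ici d).indicator g |x| := by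
    intro x
    have hx := abs_nonneg x
    by_cases h : d ≤ |x|
    · rw [Set.indicator_of_mem (by exact h), ← ENNReal.ofReal_mul hA,
        ← ENNReal.ofReal_add (by positivity) (by positivity)]
      apply ENNReal.ofReal_le_ofReal
      -- `|x| + T` is at most twice the larger of its two terms.
      have h2 : (|x| + T) ^ q ≤ 2 ^ q * (1 + |x|) ^ q + 2 ^ q * T ^ q := by
        rw [← Real.mul_rpow zero_le_two (by positivity), ← Real.mul_rpow zero_le_two hT]
        rcases le_total |x| T with h3 | h3
        · exact (Real.rpow_le_rpow (by positivity) (by linarith : |x| + T ≤ 2 * T) hq.le).trans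
            (le_add_of_nonneg_left (by positivity))
        · exact (Real.rpow_le_rpow (by positivity)
            (by linarith : |x| + T ≤ 2 * (1 + |x|)) hq.le).trans
            (le_add_of_nonneg_right (by positivity))
      calc |thr (σ * T) (b + σ * x) - b| ^ q ≤ (σ * (|x| + T)) ^ q := by
            gcongr
            exact abs_thr_sub_le hσ hT
        _ = σ ^ q * (|x| + T) ^ q := Real.mul_rpow hσ.le (by positivity)
        _ ≤ σ ^ q * (2 ^ q * (1 + |x|) ^ q + 2 ^ q * T ^ q) := by gcongr
        _ = _ := by simp only [A]; ring
    · rw [Set.indicator_of_notMem (by exact h), add_zero, ← ENNReal.ofReal_mul hA]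
      apply ENNReal.ofReal_le_ofReal
      have hkeep : σ * T ≤ |b + σ * x| := by
        have h1 : |b| ≤ |b + σ * x| + |σ * x| := by
          have := abs_sub (b + σ * x) (σ * x)
          rwa [add_sub_cancel_right] at this
        rw [abs_mul, abs_of_pos hσ] at h1
        push Not at h
        nlinarith
      simp only [A]
      rw [thr, if_pos hkeep, add_sub_cancel_left, abs_mul, abs_of_pos hσ, mul_assoc,
        ← Real.mul_rpow zero_le_two (by positivity), ← Real.mul_rpow hσ.le (by positivity)]
      gcongr
      linarith
  rw [coordRisk_eq]
  refine (lintegral_mono hpt).trans ?_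
  rw [lintegral_add_left (by fun_prop), lintegral_const_mul _ (by fun_prop),
    ofReal_shiftMoment hq]
  have htail := lintegral_tail_le hg hd
  have hconst : ∫⁻ u, g (|u| + d) ∂stdG = ENNReal.ofReal (A * T ^ q) := by simp [g]
  rw [hconst, ← ENNReal.ofReal_mul (by positivity)] at htail
  have hK := shiftMoment_nonneg q
  rw [← ENNReal.ofReal_mul hA]
  refine (add_le_add le_rfl htail).trans ?_
  rw [← ENNReal.ofReal_add (by positivity) (by positivity)]
  apply ENNReal.ofReal_le_ofReal
  exact le_of_eq (by ring)

/-- A sum over coordinates with at most `s` nonzero means is bounded by `p` copies of the bound at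
zero plus `s` copies of the bound away from zero. -/
lemma sum_coordRisk_le {p s : ℕ} {σ q τ u v : ℝ} {β : Fin p → ℝ}
    (hs : (Finset.univ.filter fun i => β i ≠ 0).card ≤ s) (hu : 0 ≤ u) (hv : 0 ≤ v)
    (h0 : coordRisk σ q τ 0 ≤ ENNReal.ofReal u)
    (h1 : ∀ j, β j ≠ 0 → coordRisk σ q τ (β j) ≤ ENNReal.ofReal v) :
    ∑ j, coordRisk σ q τ (β j) ≤ ENNReal.ofReal (p * u + s * v) := by
  calc ∑ j, coordRisk σ q τ (β j)
      ≤ ∑ j, (ENNReal.ofReal u + if β j ≠ 0 then ENNReal.ofReal v else 0) := by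
        refine Finset.sum_le_sum fun j _ => ?_
        by_cases h : β j = 0
        · rw [h]
          exact h0.trans le_self_add
        · rw [if_pos h]
          exact (h1 j h).trans le_add_self
    _ = p * ENNReal.ofReal u
          + (Finset.univ.filter fun i => β i ≠ 0).card * ENNReal.ofReal v := by
        rw [Finset.sum_add_distrib, ← Finset.sum_filter]
        simp
    _ ≤ p * ENNReal.ofReal u + s * ENNReal.ofReal v := by gcongr
    _ = _ := by
        rw [ENNReal.ofReal_add (by positivity) (by positivity),
          ENNReal.ofReal_mul (Nat.cast_nonneg p), ENNReal.ofReal_mul (Nat.cast_nonneg s),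
          ENNReal.ofReal_natCast, ENNReal.ofReal_natCast]

/-! ### The risk over sparse vectors -/

lemma one_lt_log_of_three_lt {r : ℝ} (hr : 3 < r) : 1 < Real.log r := by
  rw [Real.lt_log_iff_exp_lt (by linarith)]
  linarith [Real.exp_one_lt_d9]

/-- Theorem (upper bound for the adaptive estimator `β̂^s`). -/
theorem stmt_13 (q : ℝ) (hq : 1 ≤ q) :
    ∃ C : ℝ, 0 < C ∧ ∀ (σ a : ℝ) (s p : ℕ), 0 < σ → 0 < a → 1 ≤ s →
      (s : ℝ) < (p : ℝ) / 4 →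
      maxRisk p s σ q a (hardThr p (tStarS p s σ q))
        ≤ ENNReal.ofReal (C * PhiAd p s σ q a) := by
  have hq0 : 0 < q := by linarith
  have hK := shiftMoment_nonneg q
  have hM := absMoment_pos hq0
  set K := shiftMoment q
  set M := absMoment q with hMdef
  -- `A` is the constant in `T ^ q ≤ A * L ^ (q / 2)`, where `L = log (p / s - 1)`.
  set A : ℝ := (2 + q) ^ (q / 2)
  have hA : 0 < A := by positivity
  set B : ℝ := 4 * A * K + 2 ^ q * (K + 2 * A)
  have hB : 0 < B := by positivity
  refine ⟨B / M + B, by positivity, fun σ a s p hσ ha hs hsp => ?_⟩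
  have hs0 : (0 : ℝ) < s := by exact_mod_cast hs
  have hr : 3 < (p : ℝ) / s - 1 := by
    have : 4 < (p : ℝ) / s := by rw [lt_div_iff₀ hs0]; linarith
    linarith
  set r : ℝ := (p : ℝ) / s - 1 with hrdef
  have hr0 : 0 < r := by linarith
  have hp : (p : ℝ) = s * (r + 1) := by rw [hrdef]; field_simp; ring
  set L : ℝ := Real.log r with hL
  have hL1 : 1 < L := one_lt_log_of_three_lt hr
  have hL0 : 0 < L := by linarith
  have hLL : 0 < Real.log L := Real.log_pos hL1
  set d : ℝ := Real.sqrt (q * Real.log L) with hd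
  set T : ℝ := Real.sqrt (2 * L + q * Real.log L) with hT
  have hd0 : 0 ≤ d := Real.sqrt_nonneg _
  have hd2 : d ^ 2 = q * Real.log L := Real.sq_sqrt (by positivity)
  have hT2 : T ^ 2 = 2 * L + q * Real.log L := Real.sq_sqrt (by positivity)
  have hT1 : 1 ≤ T := by
    rw [hT, Real.one_le_sqrt]
    nlinarith
  have hτ : tStarS p s σ q = σ * T := by
    rw [tStarS, ← hrdef, ← hL, hT, ← Real.sqrt_sq hσ.le, ← Real.sqrt_mul (sq_nonneg _),
      Real.sqrt_sq hσ.le]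
    ring_nf
  have haOne : aOne p s σ q = σ * (T + d) := by
    have h1 : aOne p s σ q = tStarS p s σ q
      + Real.sqrt (σ ^ 2 * (q * Real.log L)) := by
        rw [aOne, tStarS, ← hrdef, ← hL]
        ring_nf
    rw [h1, hτ, Real.sqrt_mul (sq_nonneg _), Real.sqrt_sq hσ.le]
    ring
  have hsq : ∀ x : ℝ, 0 ≤ x → x ^ q = (x ^ 2) ^ (q / 2) := fun x hx => by
    rw [← Real.rpow_natCast, ← Real.rpow_mul hx]
    congr 1
    push_cast
    ring
  have hTq : T ^ q ≤ A * L ^ (q / 2) := by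
    rw [hsq T (by linarith), ← Real.mul_rpow (by positivity) hL0.le, hT2]
    have : Real.log L ≤ L := (Real.log_le_sub_one_of_pos hL0).trans (by linarith)
    gcongr
    nlinarith
  have hLq : 1 ≤ L ^ (q / 2) := Real.one_le_rpow hL1.le (by positivity)
  have hexpd : Real.exp (-d ^ 2 / 2) = (L ^ (q / 2))⁻¹ := by
    rw [Real.rpow_def_of_pos hL0, ← Real.exp_neg, neg_div, hd2]
    ring_nf
  have hexpL : Real.exp (-L) = r⁻¹ := by rw [Real.exp_neg, Real.exp_log hr0]
  have hexpT : Real.exp (-T ^ 2 / 2) = r⁻¹ * (L ^ (q / 2))⁻¹ := by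
    rw [Real.rpow_def_of_pos hL0, ← Real.exp_neg, ← hexpL, ← Real.exp_add, hT2]
    ring_nf
  have hσq : 0 < σ ^ q := by positivity
  -- The threshold is calibrated so that all `p` null coordinates together cost `O(s σ ^ q)`.
  have hnull : p * (2 * Real.exp (-T ^ 2 / 2) * (σ ^ q * T ^ q * K))
      ≤ s * σ ^ q * (3 * A * K) := by
    have h1 : T ^ q * (L ^ (q / 2))⁻¹ ≤ A := by
      rw [← div_eq_mul_inv, div_le_iff₀ (by positivity)]
      exact hTq
    have h2 : (r + 1) * r⁻¹ * 2 ≤ 3 := by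
      have : (r + 1) * r⁻¹ * 2 = 2 + 2 * r⁻¹ := by field_simp
      have : r⁻¹ ≤ 3⁻¹ := inv_anti₀ (by norm_num) hr.le
      linarith
    calc p * (2 * Real.exp (-T ^ 2 / 2) * (σ ^ q * T ^ q * K))
        = s * σ ^ q * (((r + 1) * r⁻¹ * 2) * (T ^ q * (L ^ (q / 2))⁻¹) * K) := by
          rw [hexpT, hp]; ring
      _ ≤ s * σ ^ q * (3 * A * K) := by gcongr
  rw [hτ, maxRisk]
  refine iSup₂_le fun β hβ => ?_
  rw [seqRisk_eq_sum]
  have h0 := coordRisk_zero hσ hq0 hT1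
  rw [PhiAd, haOne]
  split_ifs with hcase
  · have h1 : ∀ j, β j ≠ 0 → _ := fun j hj =>
      coordRisk_big hσ hq0 (zero_le_one.trans hT1) hd0 (hcase.trans (hβ.2 j hj))
    refine (sum_coordRisk_le hβ.1 (by positivity) (by positivity) h0 h1).trans ?_
    apply ENNReal.ofReal_le_ofReal
    have h3 : T ^ q * (2 * Real.exp (-d ^ 2 / 2)) ≤ 2 * A := by
      rw [hexpd, mul_left_comm, ← div_eq_mul_inv]
      gcongr
      rw [div_le_iff₀ (by positivity)]
      exact hTq
    rw [sigmaqq_eq hσ, ← hMdef]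
    calc p * (2 * Real.exp (-T ^ 2 / 2) * (σ ^ q * T ^ q * K))
          + s * (σ ^ q * 2 ^ q * (K + T ^ q * (2 * Real.exp (-d ^ 2 / 2))))
        ≤ s * σ ^ q * (3 * A * K) + s * (σ ^ q * 2 ^ q * (K + 2 * A)) := by gcongr
      _ ≤ s * σ ^ q * B := by
          have : 0 ≤ s * σ ^ q * (A * K) := by positivity
          simp only [B]
          linarith
      _ ≤ s * σ ^ q * B + B * (σ ^ q * M * s) := le_add_of_nonneg_right (by positivity)
      _ = (B / M + B) * (σ ^ q * M * s) := by field_simp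
  · have h1 : ∀ j, β j ≠ 0 → _ := fun j _ => coordRisk_le (β j) hσ hq0 hT1
    refine (sum_coordRisk_le hβ.1 (by positivity) (by positivity) h0 h1).trans ?_
    apply ENNReal.ofReal_le_ofReal
    calc p * (2 * Real.exp (-T ^ 2 / 2) * (σ ^ q * T ^ q * K)) + s * (σ ^ q * T ^ q * K)
        ≤ s * σ ^ q * (3 * A * K) * L ^ (q / 2)
            + s * (σ ^ q * (A * L ^ (q / 2)) * K) := by
          refine add_le_add (hnull.trans (le_mul_of_one_le_right (by positivity) hLq)) ?_
          gcongr
      _ = (4 * A * K) * (s * σ ^ q * L ^ (q / 2)) := by ring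
      _ ≤ (B / M + B) * (s * σ ^ q * (2 * L) ^ (q / 2)) := by
          have h5 : 4 * A * K ≤ B / M + B := by
            have : 0 ≤ B / M := by positivity
            have : 0 ≤ 2 ^ q * (K + 2 * A) := by positivity
            simp only [B] at *
            linarith
          gcongr
          linarith

end
end

section
/- For every σ > 0 and all integers s, p with 1 ≤ s ≤ p/4, setting t* := σ√(2 log(p/s − 1)), one has ψ_+(p, s, t*, σ) ≤ 2s; that is, (p − s)·P(σε > t(t*)) + s·P(σε > (t* − t(t*))_+) ≤ 2s, where in fact t(t*) = t*. -/
/-!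
Put `R = p / s - 1 ≥ 3`, so that `log R > 0` and `t* = σ τ` with `τ = √(2 log R) > 0`. As
`t*² = 2 σ² log R`, both summands of `t(t*)` equal `t* / 2`, whence `t(t*) = t*`. The Chernoff
bound `P(ε > τ) ≤ exp (-τ² / 2) = 1 / R` and `p - s = s R` show that the first term is at most `s`;
the second is `s` times a probability, so at most `s` as well.
-/

open MeasureTheory ProbabilityTheory Filter
open scoped ENNReal NNReal BigOperators Classical

noncomputable section

/-- Chernoff bound for the Gaussian tail. -/
lemma PgtS_mul_le_exp {σ τ : ℝ} (hσ : 0 < σ) (hτ : 0 ≤ τ) :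
    PgtS σ (σ * τ) ≤ Real.exp (-(τ ^ 2 / 2)) := by
  have hint : Integrable (fun x => Real.exp (τ * id x)) (gaussianReal 0 1) :=
    integrable_exp_mul_gaussianReal τ
  have h := measure_ge_le_exp_mul_mgf τ hτ hint
  rw [mgf_id_gaussianReal, ← Real.exp_add] at h
  calc PgtS σ (σ * τ) ≤ (gaussianReal 0 1).real {x | τ ≤ id x} :=
        measureReal_mono (μ := gaussianReal 0 1)
          fun x (hx : σ * τ < σ * x) => (lt_of_mul_lt_mul_left hx hσ.le).le
    _ ≤ _ := h
    _ = Real.exp (-(τ ^ 2 / 2)) := by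
        congr 1
        push_cast
        ring

lemma PgtS_le_one (σ t : ℝ) : PgtS σ t ≤ 1 :=
  measureReal_le_one (μ := gaussianReal 0 1)

/-- `t(t*) = t*` and `ψ₊(p, s, t*, σ) ≤ 2s` for `s ≤ p/4`. -/
theorem stmt_16 (σ : ℝ) (hσ : 0 < σ) (s p : ℕ) (hs : 1 ≤ s) (hsp : (s : ℝ) ≤ (p : ℝ) / 4) :
    tFun p s σ (tStar p s σ) = tStar p s σ ∧
    ((p : ℝ) - s) * PgtS σ (tFun p s σ (tStar p s σ))
      + s * PgtS σ (max (tStar p s σ - tFun p s σ (tStar p s σ)) 0) ≤ 2 * s := by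
  have hs0 : (0 : ℝ) < s := by exact_mod_cast hs
  set R : ℝ := (p : ℝ) / s - 1 with hR
  have hps : (p : ℝ) - s = s * R := by
    rw [hR]
    field_simp
  have hR1 : 1 < R := by
    have : 4 ≤ (p : ℝ) / s := by
      rw [le_div_iff₀ hs0]
      linarith
    linarith
  have hlog : 0 < Real.log R := Real.log_pos hR1
  have hsq : Real.sqrt (2 * Real.log R) ^ 2 = 2 * Real.log R := Real.sq_sqrt (by linarith)
  have hτ : 0 < Real.sqrt (2 * Real.log R) := Real.sqrt_pos.2 (by linarith)
  have ht : tFun p s σ (tStar p s σ) = tStar p s σ := by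
    simp only [tFun, tStar, ← hR]
    field_simp
    linarith
  refine ⟨ht, ?_⟩
  have h1 : PgtS σ (tStar p s σ) ≤ R⁻¹ := by
    refine (PgtS_mul_le_exp hσ hτ.le).trans_eq ?_
    rw [hsq, mul_div_cancel_left₀ _ two_ne_zero, Real.exp_neg,
      Real.exp_log (by linarith)]
  rw [ht, hps]
  have h2 : s * R * PgtS σ (tStar p s σ) ≤ s := by
    calc s * R * PgtS σ (tStar p s σ) ≤ s * R * R⁻¹ := by gcongr
      _ = s := mul_inv_cancel_right₀ (by linarith) _
  have h3 := mul_le_mul_of_nonneg_left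
    (PgtS_le_one σ (max (tStar p s σ - tStar p s σ) 0)) hs0.le
  linarith

end
end
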